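/- Let (H,η) be an extended strip decomposition of a graph G. Suppose Q1 and Q2 are two induced paths in G that are vertex-disjoint and non-adjacent, such that Q1 has an endpoint z1 and Q2 has an endpoint z2 with both z1 and z2 peripheral in (H,η). Then there does not exist an edge uv of H such that both Q1 and Q2 intersect η(uv, u). -/

import Mathlib

noncomputable section

namespace Paper

/-- The closed neighborhood `N[X]` of a set `X` of vertices. -/
def closedNbhd {V : Type} (G : SimpleGraph V) (X : Set V) : Set V :=
  {v | v ∈ X ∨ ∃ x ∈ X, G.Adj x v}

/-- The total weight `w(X)` of a set of vertices. -/
def wsum {V : Type} (w : V → ℕ) (X : Set V) : ℕ := ∑ᶠ x ∈ X, w x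

/-- `p : Fin m → V` is an induced path in `G` (on `m` vertices). -/
def InducedPathFun {V : Type} (G : SimpleGraph V) {m : ℕ} (p : Fin m → V) : Prop :=
  Function.Injective p ∧
    ∀ i j : Fin m, G.Adj (p i) (p j) ↔ ((i : ℕ) + 1 = (j : ℕ) ∨ (j : ℕ) + 1 = (i : ℕ))

/-- The vertex sets `A` and `B` are non-adjacent in `G`. -/
def NonAdj {V : Type} (G : SimpleGraph V) (A B : Set V) : Prop :=
  ∀ x ∈ A, ∀ y ∈ B, ¬ G.Adj x y

/-- `A` intersects or is adjacent to `B` in `G`. -/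
def Touches {V : Type} (G : SimpleGraph V) (A B : Set V) : Prop :=
  ∃ x ∈ A, ∃ y ∈ B, x = y ∨ G.Adj x y

/-- `T` is (the vertex set of) a triangle in `H`. -/
def IsTriangle {W : Type} (H : SimpleGraph W) (T : Set W) : Prop :=
  ∃ u v x, H.Adj u v ∧ H.Adj u x ∧ H.Adj v x ∧ T = {u, v, x}

/-- An extended strip decomposition of the graph `G`, with pattern graph `H`.
`vmap u` is `η(u)` for a vertex `u` of `H`, `emap e` is `η(e)` for an edge `e` of `H`,
`endmap u v` is `η(uv, u)` for an edge `uv` of `H` (with distinguished endpoint `u`),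
and `tmap T` is `η(T)` for a triangle `T` of `H`.  (The values of `emap`, `endmap`, `tmap`
on non-edges/non-triangles are irrelevant.) -/
structure ESD {V W : Type} (G : SimpleGraph V) (H : SimpleGraph W) where
  vmap : W → Set V
  emap : Sym2 W → Set V
  endmap : W → W → Set V
  tmap : Set W → Set V
  endmap_subset : ∀ u v, H.Adj u v → endmap u v ⊆ emap s(u, v)
  cover : ∀ x : V, (∃ u, x ∈ vmap u) ∨ (∃ e ∈ H.edgeSet, x ∈ emap e) ∨
    (∃ T, IsTriangle H T ∧ x ∈ tmap T)
  disj_vv : ∀ u u', u ≠ u' → Disjoint (vmap u) (vmap u')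
  disj_ee : ∀ e e', e ∈ H.edgeSet → e' ∈ H.edgeSet → e ≠ e' → Disjoint (emap e) (emap e')
  disj_tt : ∀ T T', IsTriangle H T → IsTriangle H T' → T ≠ T' → Disjoint (tmap T) (tmap T')
  disj_ve : ∀ u e, e ∈ H.edgeSet → Disjoint (vmap u) (emap e)
  disj_vt : ∀ u T, IsTriangle H T → Disjoint (vmap u) (tmap T)
  disj_et : ∀ e T, e ∈ H.edgeSet → IsTriangle H T → Disjoint (emap e) (tmap T)
  fully_adj : ∀ v u u', H.Adj v u → H.Adj v u' → u ≠ u' →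
    ∀ x ∈ endmap v u, ∀ y ∈ endmap v u', G.Adj x y
  edge_cond : ∀ x y, G.Adj x y →
    (∃ u, x ∈ vmap u ∧ y ∈ vmap u) ∨
    (∃ e ∈ H.edgeSet, x ∈ emap e ∧ y ∈ emap e) ∨
    (∃ T, IsTriangle H T ∧ x ∈ tmap T ∧ y ∈ tmap T) ∨
    (∃ v u u', H.Adj v u ∧ H.Adj v u' ∧ u ≠ u' ∧ x ∈ endmap v u ∧ y ∈ endmap v u') ∨
    (∃ v u, H.Adj v u ∧ ((x ∈ vmap v ∧ y ∈ endmap v u) ∨ (y ∈ vmap v ∧ x ∈ endmap v u))) ∨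
    (∃ T u u', IsTriangle H T ∧ u ∈ T ∧ u' ∈ T ∧ H.Adj u u' ∧
      ((x ∈ tmap T ∧ y ∈ endmap u u' ∩ endmap u' u) ∨
       (y ∈ tmap T ∧ x ∈ endmap u u' ∩ endmap u' u)))

/-- Names (labels) for the atoms of an extended strip decomposition with pattern graph on `W`:
`bot e = A_e^⊥`, `half u v = A_{uv}^u`, `full e = A_e^{uv}` for an edge `e = uv`,
`vert u = A_u` for a vertex `u`, and `tri T = A_T` for a triangle `T`. -/
inductive AtomLabel (W : Type) where
  | bot : Sym2 W → AtomLabel W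
  | half : W → W → AtomLabel W
  | full : Sym2 W → AtomLabel W
  | vert : W → AtomLabel W
  | tri : Set W → AtomLabel W

/-- An atom label is valid if the underlying feature is really an edge / a triangle of `H`. -/
def ValidAtom {W : Type} (H : SimpleGraph W) : AtomLabel W → Prop
  | .bot e => e ∈ H.edgeSet
  | .half u v => H.Adj u v
  | .full e => e ∈ H.edgeSet
  | .vert _ => True
  | .tri T => IsTriangle H T

/-- The vertex set of `G` corresponding to an atom label. -/
def ESD.atomSet {V W : Type} {G : SimpleGraph V} {H : SimpleGraph W} (D : ESD G H) :
    AtomLabel W → Set V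
  | .bot e => D.emap e \
      Sym2.lift ⟨fun u v => D.endmap u v ∪ D.endmap v u, fun _ _ => Set.union_comm _ _⟩ e
  | .half u v => D.vmap u ∪ (D.emap s(u, v) \ D.endmap v u)
  | .full e =>
      Sym2.lift ⟨fun u v => D.vmap u ∪ D.vmap v, fun _ _ => Set.union_comm _ _⟩ e ∪
        D.emap e ∪ ⋃ T ∈ {T : Set W | IsTriangle H T ∧ ∀ x ∈ e, x ∈ T}, D.tmap T
  | .vert u => D.vmap u
  | .tri T => D.tmap T

/-- The four atoms associated with the edge `uv` of `H`. -/
def Quad {W : Type} (u v : W) : Set (AtomLabel W) :=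
  {AtomLabel.bot s(u, v), AtomLabel.half u v, AtomLabel.half v u, AtomLabel.full s(u, v)}

/-- Two atom labels are conflicting. -/
def Conflict {W : Type} (H : SimpleGraph W) (a b : AtomLabel W) : Prop :=
  (∃ u v, H.Adj u v ∧ a ≠ b ∧ a ∈ Quad u v ∧ b ∈ Quad u v) ∨
  (∃ u v, H.Adj u v ∧
    (((a = AtomLabel.half u v ∨ a = AtomLabel.full s(u, v)) ∧ b = AtomLabel.vert u) ∨
     ((b = AtomLabel.half u v ∨ b = AtomLabel.full s(u, v)) ∧ a = AtomLabel.vert u))) ∨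
  (∃ u v v', H.Adj u v ∧ H.Adj u v' ∧ v ≠ v' ∧
    (a = AtomLabel.half u v ∨ a = AtomLabel.full s(u, v)) ∧
    (b = AtomLabel.half u v' ∨ b = AtomLabel.full s(u, v'))) ∨
  (∃ u v T, H.Adj u v ∧ IsTriangle H T ∧ u ∈ T ∧ v ∈ T ∧
    ((a = AtomLabel.full s(u, v) ∧ b = AtomLabel.tri T) ∨
     (b = AtomLabel.full s(u, v) ∧ a = AtomLabel.tri T)))

/-- A family of atoms is independent if its members are pairwise non-conflicting. -/
def IndepFamily {W : Type} (H : SimpleGraph W) (𝒜 : Set (AtomLabel W)) : Prop :=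
  ∀ a ∈ 𝒜, ∀ b ∈ 𝒜, ¬ Conflict H a b

/-- The vertex `z` of `G` is peripheral in the extended strip decomposition `D`. -/
def Peripheral {V W : Type} {G : SimpleGraph V} {H : SimpleGraph W} (D : ESD G H)
    (z : V) : Prop :=
  ∃ wz u, H.Adj wz u ∧ (∀ u', H.Adj wz u' → u' = u) ∧ D.endmap wz u = {z}

/-!
Only connectedness of the two paths matters. Suppose connected sets `S₁` and `S₂`, disjoint and
non-adjacent, both meet `η(uv, u)`, and let `zᵢ ∈ Sᵢ` be peripheral, with leaf edge `eᵢ` of `H`.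
A connected set can leave the full atom `A_{uv}^{uv}` only through some `η(f, w)` with
`w ∈ {u, v}` and `f ≠ uv`; for `w = u` this set is complete to `η(uv, u)`, so `w = v`. Hence if
neither `eᵢ` is `uv`, each `Sᵢ` meets some `η(fᵢ, v)` with `fᵢ ≠ uv`, and non-adjacency forces
`f₁ = f₂`. Both sets thus meet `η(f₁, v)`, where `S₁` does so closer to `z₁`, and we descend.
If some `eᵢ` is `uv`, its leaf is `v`, as `η(uv, u)` has two elements. Then `uv` is the only edge
at `v`, so neither set leaves the full atom and `η(uv, v) = {z₁} = {z₂}`, contradicting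
disjointness.
-/

theorem exists_boundary_adj_dist_lt {V : Type*} {G : SimpleGraph V} (hG : G.Preconnected)
    {A : Set V} {x z : V} (hx : x ∈ A) (hz : z ∉ A) :
    ∃ a ∈ A, ∃ b ∉ A, G.Adj a b ∧ G.dist b z < G.dist x z := by
  obtain ⟨p, hp⟩ := (hG x z).exists_walk_length_eq_dist
  suffices h : ∀ {x} (p : G.Walk x z), x ∈ A →
      ∃ a ∈ A, ∃ b ∉ A, G.Adj a b ∧ G.dist b z < p.length from hp ▸ h p hx
  clear! x
  intro x p hx
  induction p with
  | nil => exact absurd hx hz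
  | @cons x y z hxy q ih =>
    rw [SimpleGraph.Walk.length_cons]
    by_cases hy : y ∈ A
    · obtain ⟨a, ha, b, hb, hab, hlt⟩ := ih hz hy
      exact ⟨a, ha, b, hb, hab, hlt.trans q.length.lt_succ_self⟩
    · exact ⟨x, hx, y, hy, hxy, Nat.lt_succ_of_le (SimpleGraph.dist_le q)⟩

theorem InducedPathFun.preconnected_induce_range {V : Type} {G : SimpleGraph V} {m : ℕ}
    {p : Fin m → V} (hp : InducedPathFun G p) : (G.induce (Set.range p)).Preconnected := by
  let toRange : SimpleGraph.pathGraph m →g G.induce (Set.range p) :=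
    ⟨Set.rangeFactorization p, fun {i j} hij ↦ (hp.2 i j).2 (SimpleGraph.pathGraph_adj.1 hij)⟩
  exact (SimpleGraph.pathGraph_preconnected m).map toRange Set.rangeFactorization_surjective

theorem IsTriangle.mem_or_mem_of_subset {W : Type} {H : SimpleGraph W} {T : Set W}
    (hT : IsTriangle H T) {a b : W} (ha : a ∈ T) (hb : b ∈ T) (hab : a ≠ b) {e : Sym2 W}
    (he : ¬ e.IsDiag) (heT : ∀ w ∈ e, w ∈ T) : a ∈ e ∨ b ∈ e := by
  obtain ⟨r, s, t, -, -, -, rfl⟩ := hT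
  induction e with | _ u v
  simp only [Sym2.mem_iff, Sym2.mk_isDiag_iff, forall_eq_or_imp, forall_eq,
    Set.mem_insert_iff, Set.mem_singleton_iff] at *
  grind

namespace ESD

variable {V W : Type} {G : SimpleGraph V} {H : SimpleGraph W} (D : ESD G H)
  {e : Sym2 W} {u v : W} {x y z : V}

section FullAtom

theorem mem_atomSet_full : x ∈ D.atomSet (.full e) ↔
    (∃ w ∈ e, x ∈ D.vmap w) ∨ x ∈ D.emap e ∨
      ∃ T, IsTriangle H T ∧ (∀ w ∈ e, w ∈ T) ∧ x ∈ D.tmap T := by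
  induction e with | _ u v
  simp [atomSet, or_assoc, and_assoc]

variable {D}

theorem eq_of_mem_atomSet_full_of_mem_emap (he : e ∈ H.edgeSet) (hx : x ∈ D.atomSet (.full e))
    {e' : Sym2 W} (he' : e' ∈ H.edgeSet) (hxe' : x ∈ D.emap e') : e' = e := by
  by_contra hne
  rcases D.mem_atomSet_full.1 hx with ⟨w, -, hxw⟩ | hxe | ⟨T, hT, -, hxT⟩
  · exact (D.disj_ve w e' he').notMem_of_mem_left hxw hxe'
  · exact (D.disj_ee e' e he' he hne).notMem_of_mem_left hxe' hxe
  · exact (D.disj_et e' T he' hT).notMem_of_mem_left hxe' hxT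

theorem mem_of_mem_atomSet_full_of_mem_vmap (he : e ∈ H.edgeSet) (hx : x ∈ D.atomSet (.full e))
    (hxv : x ∈ D.vmap v) : v ∈ e := by
  by_contra hve
  rcases D.mem_atomSet_full.1 hx with ⟨w, hwe, hxw⟩ | hxe | ⟨T, hT, -, hxT⟩
  · exact (D.disj_vv v w (fun h ↦ hve (h ▸ hwe))).notMem_of_mem_left hxv hxw
  · exact (D.disj_ve v e he).notMem_of_mem_left hxv hxe
  · exact (D.disj_vt v T hT).notMem_of_mem_left hxv hxT

theorem subset_of_mem_atomSet_full_of_mem_tmap (he : e ∈ H.edgeSet)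
    (hx : x ∈ D.atomSet (.full e)) {T : Set W} (hT : IsTriangle H T) (hxT : x ∈ D.tmap T) :
    ∀ w ∈ e, w ∈ T := by
  rcases D.mem_atomSet_full.1 hx with ⟨w, -, hxw⟩ | hxe | ⟨T', hT', heT', hxT'⟩
  · exact ((D.disj_vt w T hT).notMem_of_mem_left hxw hxT).elim
  · exact ((D.disj_et e T he hT).notMem_of_mem_left hxe hxT).elim
  · by_cases hTT' : T = T'
    · exact hTT' ▸ heT'
    · exact ((D.disj_tt T T' hT hT' hTT').notMem_of_mem_left hxT hxT').elim

theorem eq_of_mem_atomSet_full_of_mem_endmap (he : e ∈ H.edgeSet) (hx : x ∈ D.atomSet (.full e))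
    (huv : H.Adj u v) (hxuv : x ∈ D.endmap u v) : s(u, v) = e :=
  eq_of_mem_atomSet_full_of_mem_emap he hx huv (D.endmap_subset u v huv hxuv)

theorem mem_atomSet_full_of_mem_endmap (huv : H.Adj u v) (hx : x ∈ D.endmap u v) :
    x ∈ D.atomSet (.full s(u, v)) :=
  D.mem_atomSet_full.2 (.inr (.inl (D.endmap_subset u v huv hx)))

end FullAtom

section OtherEnds

/-- The union of the sets `η(f, w)` over the edges `f ≠ e` of `H` incident with `w`. For `w ∈ e`
these are the vertices of `G` through which one leaves the full atom of `e` at its end `w`. -/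
def otherEnds (e : Sym2 W) (w : W) : Set V :=
  {x | ∃ w', H.Adj w w' ∧ s(w, w') ≠ e ∧ x ∈ D.endmap w w'}

variable {D}

theorem mem_otherEnds_of_notMem_atomSet_full (hx : x ∉ D.atomSet (.full e)) (huv : H.Adj u v)
    (hxuv : x ∈ D.endmap u v) : x ∈ D.otherEnds e u :=
  ⟨v, huv, fun h ↦ hx (h ▸ mem_atomSet_full_of_mem_endmap huv hxuv), hxuv⟩

theorem exists_mem_otherEnds_of_adj (he : e ∈ H.edgeSet) (hx : x ∈ D.atomSet (.full e))
    (hy : y ∉ D.atomSet (.full e)) (hxy : G.Adj x y) : ∃ w ∈ e, y ∈ D.otherEnds e w := by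
  have hy' := D.mem_atomSet_full.not.1 hy
  push Not at hy'
  obtain ⟨hyv, hye, hyT⟩ := hy'
  rcases D.edge_cond x y hxy with ⟨w, hxw, hyw⟩ | ⟨f, hf, hxf, hyf⟩ | ⟨T, hT, hxT, hyT'⟩ |
    ⟨w, a, b, hwa, hwb, -, hxa, hyb⟩ | ⟨w, a, hwa, ⟨hxw, hya⟩ | ⟨hyw, hxa⟩⟩ |
    ⟨T, a, b, hT, haT, hbT, hab, ⟨hxT, hya, hyb⟩ | ⟨hyT', hxa, -⟩⟩
  · exact absurd hyw (hyv w (mem_of_mem_atomSet_full_of_mem_vmap he hx hxw))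
  · exact absurd (eq_of_mem_atomSet_full_of_mem_emap he hx hf hxf ▸ hyf) hye
  · exact absurd hyT' (hyT T hT (subset_of_mem_atomSet_full_of_mem_tmap he hx hT hxT))
  · have hwe := eq_of_mem_atomSet_full_of_mem_endmap he hx hwa hxa
    exact ⟨w, hwe ▸ Sym2.mem_mk_left w a, mem_otherEnds_of_notMem_atomSet_full hy hwb hyb⟩
  · exact ⟨w, mem_of_mem_atomSet_full_of_mem_vmap he hx hxw,
      mem_otherEnds_of_notMem_atomSet_full hy hwa hya⟩
  · have hwe := eq_of_mem_atomSet_full_of_mem_endmap he hx hwa hxa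
    exact absurd hyw (hyv w (hwe ▸ Sym2.mem_mk_left w a))
  · have heT := subset_of_mem_atomSet_full_of_mem_tmap he hx hT hxT
    rcases hT.mem_or_mem_of_subset haT hbT hab.ne (H.not_isDiag_of_mem_edgeSet he) heT with
      hae | hbe
    · exact ⟨a, hae, mem_otherEnds_of_notMem_atomSet_full hy hab hya⟩
    · exact ⟨b, hbe, mem_otherEnds_of_notMem_atomSet_full hy hab.symm hyb⟩
  · obtain rfl := eq_of_mem_atomSet_full_of_mem_endmap he hx hab hxa
    exact absurd hyT' (hyT T hT (Sym2.ball.2 ⟨haT, hbT⟩))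

theorem adj_of_mem_otherEnds (huv : H.Adj u v) (hx : x ∈ D.otherEnds s(u, v) u)
    (hy : y ∈ D.endmap u v) : G.Adj x y := by
  obtain ⟨w, huw, hne, hxw⟩ := hx
  exact D.fully_adj u w v huw huv (fun h ↦ hne (h ▸ rfl)) x hxw y hy

theorem exists_mem_endmap_of_not_adj {w : W} (hx : x ∈ D.otherEnds e w)
    (hy : y ∈ D.otherEnds e w) (hxy : ¬ G.Adj x y) :
    ∃ w', H.Adj w w' ∧ x ∈ D.endmap w w' ∧ y ∈ D.endmap w w' := by
  obtain ⟨a, hwa, -, hxa⟩ := hx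
  obtain ⟨b, hwb, -, hyb⟩ := hy
  obtain rfl : a = b := by_contra fun hab ↦ hxy (D.fully_adj w a b hwa hwb hab x hxa y hyb)
  exact ⟨a, hwa, hxa, hyb⟩

end OtherEnds

section Peripheral

variable {D} {S S₁ S₂ : Set V}

theorem exists_mem_otherEnds_dist_lt (hS : (G.induce S).Preconnected) (huv : H.Adj u v)
    {x z : S} (hx : ↑x ∈ D.atomSet (.full s(u, v))) (hz : ↑z ∉ D.atomSet (.full s(u, v)))
    (hy : y ∈ D.endmap u v) (hSy : ∀ a ∈ S, ¬ G.Adj a y) :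
    ∃ x' : S, ↑x' ∈ D.otherEnds s(u, v) v ∧
      (G.induce S).dist x' z < (G.induce S).dist x z := by
  obtain ⟨a, ha, b, hb, hab, hlt⟩ :=
    exists_boundary_adj_dist_lt hS (A := {a : S | ↑a ∈ D.atomSet (.full s(u, v))}) hx hz
  obtain ⟨w, hw, hbw⟩ := exists_mem_otherEnds_of_adj huv ha hb hab
  rcases Sym2.mem_iff.1 hw with rfl | rfl
  · exact absurd (adj_of_mem_otherEnds huv hbw hy) (hSy b b.2)
  · exact ⟨b, hbw, hlt⟩

theorem endmap_eq_singleton_and_otherEnds_eq_empty (hz : Peripheral D z) (huv : H.Adj u v)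
    (hzA : z ∈ D.atomSet (.full s(u, v))) (hy : y ∈ D.endmap u v) (hyz : y ≠ z) :
    D.endmap v u = {z} ∧ D.otherEnds s(u, v) v = ∅ := by
  obtain ⟨w, w', hww', hleaf, hend⟩ := hz
  have hzw : z ∈ D.endmap w w' := hend ▸ rfl
  rcases Sym2.eq_iff.1 (eq_of_mem_atomSet_full_of_mem_endmap huv hzA hww' hzw) with
    ⟨rfl, rfl⟩ | ⟨rfl, rfl⟩
  · exact absurd (hend.subset hy) hyz
  · refine ⟨hend, Set.eq_empty_of_forall_notMem ?_⟩
    rintro a ⟨b, hwb, hne, -⟩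
    exact hne (hleaf b hwb ▸ Sym2.eq_swap)

theorem endmap_eq_singleton_or_exists_mem_otherEnds_dist_lt (hS : (G.induce S).Preconnected)
    {x z : S} (hz : Peripheral D z) (huv : H.Adj u v) (hx : ↑x ∈ D.endmap u v)
    (hy : y ∈ D.endmap u v) (hyS : y ∉ S) (hSy : ∀ a ∈ S, ¬ G.Adj a y) :
    (D.endmap v u = {↑z} ∧ D.otherEnds s(u, v) v = ∅) ∨
      ∃ x' : S, ↑x' ∈ D.otherEnds s(u, v) v ∧
        (G.induce S).dist x' z < (G.induce S).dist x z := by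
  by_cases hzA : ↑z ∈ D.atomSet (.full s(u, v))
  · exact .inl (endmap_eq_singleton_and_otherEnds_eq_empty hz huv hzA hy fun h ↦ hyS (h ▸ z.2))
  · exact .inr (exists_mem_otherEnds_dist_lt hS huv (mem_atomSet_full_of_mem_endmap huv hx) hzA
      hy hSy)

theorem exists_common_endmap_dist_lt (h₁ : (G.induce S₁).Preconnected)
    (h₂ : (G.induce S₂).Preconnected) (hd : Disjoint S₁ S₂) (ha : NonAdj G S₁ S₂)
    {x z₁ : S₁} {y z₂ : S₂} (hz₁ : Peripheral D z₁) (hz₂ : Peripheral D z₂)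
    (huv : H.Adj u v) (hx : ↑x ∈ D.endmap u v) (hy : ↑y ∈ D.endmap u v) :
    ∃ (x' : S₁) (y' : S₂) (w : W), H.Adj v w ∧ ↑x' ∈ D.endmap v w ∧ ↑y' ∈ D.endmap v w ∧
      (G.induce S₁).dist x' z₁ < (G.induce S₁).dist x z₁ := by
  have hS₁ := endmap_eq_singleton_or_exists_mem_otherEnds_dist_lt h₁ hz₁ huv hx hy
    (hd.notMem_of_mem_right y.2) fun a ha₁ ↦ ha a ha₁ y y.2
  have hS₂ := endmap_eq_singleton_or_exists_mem_otherEnds_dist_lt h₂ hz₂ huv hy hx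
    (hd.notMem_of_mem_left x.2) fun b hb₂ hbx ↦ ha x x.2 b hb₂ hbx.symm
  rcases hS₁ with ⟨hend₁, hempty⟩ | ⟨x', hx', hlt⟩ <;>
    rcases hS₂ with ⟨hend₂, hempty'⟩ | ⟨y', hy', -⟩
  · have hzz : (z₁ : V) = z₂ := Set.singleton_injective (hend₁.symm.trans hend₂)
    exact absurd (hzz ▸ z₂.2) (hd.notMem_of_mem_left z₁.2)
  · exact absurd (hempty ▸ hy') (Set.notMem_empty _)
  · exact absurd (hempty' ▸ hx') (Set.notMem_empty _)
  · obtain ⟨w, hvw, hx'w, hy'w⟩ := exists_mem_endmap_of_not_adj hx' hy' (ha x' x'.2 y' y'.2)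
    exact ⟨x', y', w, hvw, hx'w, hy'w, hlt⟩

end Peripheral

end ESD

theorem stmt13_general {V W : Type} {G : SimpleGraph V} {H : SimpleGraph W} (D : ESD G H)
    {S₁ S₂ : Set V} (h₁ : (G.induce S₁).Preconnected) (h₂ : (G.induce S₂).Preconnected)
    (hd : Disjoint S₁ S₂) (ha : NonAdj G S₁ S₂)
    (hz₁ : ∃ z ∈ S₁, Peripheral D z) (hz₂ : ∃ z ∈ S₂, Peripheral D z) :
    ∀ u v : W, H.Adj u v →
      ¬ ((S₁ ∩ D.endmap u v).Nonempty ∧ (S₂ ∩ D.endmap u v).Nonempty) := by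
  obtain ⟨z₁, hz₁S, hz₁⟩ := hz₁
  obtain ⟨z₂, hz₂S, hz₂⟩ := hz₂
  lift z₁ to S₁ using hz₁S
  lift z₂ to S₂ using hz₂S
  rintro u v huv ⟨⟨x, hxS, hx⟩, ⟨y, hyS, hy⟩⟩
  lift x to S₁ using hxS
  lift y to S₂ using hyS
  induction hn : (G.induce S₁).dist x z₁ using Nat.strong_induction_on generalizing x y u v with
  | _ n ih =>
    obtain ⟨x', y', w, hvw, hx', hy', hlt⟩ :=
      ESD.exists_common_endmap_dist_lt h₁ h₂ hd ha hz₁ hz₂ huv hx hy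
    exact ih _ (hn ▸ hlt) v w hvw x' hx' y' hy' rfl

/-- if `Q₁` and `Q₂` are vertex-disjoint, non-adjacent induced paths in `G`,
each having a peripheral endpoint in the extended strip decomposition `(H, η)` of `G`,
then there is no edge `uv` of `H` such that both `Q₁` and `Q₂` intersect `η(uv, u)`. -/
theorem stmt13 {V W : Type} (G : SimpleGraph V) (H : SimpleGraph W) (D : ESD G H)
    (m₁ m₂ : ℕ) (p₁ : Fin (m₁ + 1) → V) (p₂ : Fin (m₂ + 1) → V)
    (h₁ : InducedPathFun G p₁) (h₂ : InducedPathFun G p₂)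
    (hd : Disjoint (Set.range p₁) (Set.range p₂))
    (ha : NonAdj G (Set.range p₁) (Set.range p₂))
    (hp₁ : Peripheral D (p₁ 0) ∨ Peripheral D (p₁ (Fin.last m₁)))
    (hp₂ : Peripheral D (p₂ 0) ∨ Peripheral D (p₂ (Fin.last m₂))) :
    ∀ u v : W, H.Adj u v →
      ¬ ((Set.range p₁ ∩ D.endmap u v).Nonempty ∧
         (Set.range p₂ ∩ D.endmap u v).Nonempty) :=
  stmt13_general D h₁.preconnected_induce_range h₂.preconnected_induce_range hd ha
    (by rcases hp₁ with hz | hz <;> exact ⟨_, Set.mem_range_self _, hz⟩)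
    (by rcases hp₂ with hz | hz <;> exact ⟨_, Set.mem_range_self _, hz⟩)

end Paper
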